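/- arXiv:1504.06783 — 2 statements merged into one kernel-verified Lean document; each statement's English description precedes it below -/
import Mathlib

section
/- Let M and N be nonzero finitely generated modules over a Noetherian local ring R. Then M ⊕ N is a sequentially Cohen-Macaulay R-module if and only if both M and N are sequentially Cohen-Macaulay R-modules. -/
open IsLocalRing

/-- The (Krull) dimension of a module: `dim_R M = dim (R / ann_R M)`;
the zero module has dimension `⊥` (i.e. `-∞`). -/
noncomputable def moduleDim (R : Type*) [CommRing R] (M : Type*) [AddCommGroup M]
    [Module R M] : WithBot ℕ∞ :=
  ringKrullDim (R ⧸ Module.annihilator R M)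

/-- `dimLe d n` means `d ≤ n` where `n : ℤ` and `d` is a dimension in `WithBot ℕ∞`
(so for `n < 0` this means `d = ⊥`, i.e. the module is zero). -/
def dimLe (d : WithBot ℕ∞) (n : ℤ) : Prop :=
  if 0 ≤ n then d ≤ ((n.toNat : ℕ∞) : WithBot ℕ∞) else d = ⊥

/-- The depth of a module over a Noetherian local ring: the supremum of lengths of
regular sequences on `M` contained in the maximal ideal. -/
noncomputable def moduleDepth (R : Type*) [CommRing R] [IsLocalRing R] (M : Type*)
    [AddCommGroup M] [Module R M] : ℕ∞ :=
  sSup {n : ℕ∞ | ∃ rs : List R, (rs.length : ℕ∞) = n ∧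
    (∀ r ∈ rs, r ∈ maximalIdeal R) ∧ RingTheory.Sequence.IsRegular M rs}

/-- A module over a Noetherian local ring is Cohen-Macaulay if it is zero or
`depth M = dim M`. -/
def IsCMModule (R : Type*) [CommRing R] [IsLocalRing R] (M : Type*) [AddCommGroup M]
    [Module R M] : Prop :=
  Nontrivial M → (moduleDepth R M : WithBot ℕ∞) = moduleDim R M

/-- A module over a (not necessarily local) commutative ring is Cohen-Macaulay if all its
localizations at primes are Cohen-Macaulay. -/
def IsCMModuleGen (R : Type*) [CommRing R] (M : Type*) [AddCommGroup M] [Module R M] : Prop :=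
  ∀ (P : Ideal R) [P.IsPrime],
    IsCMModule (Localization.AtPrime P) (LocalizedModule P.primeCompl M)

/-- `D : Fin (ℓ+1) → Submodule R M` is the dimension filtration of `M`:
`D 0 = 0`, `D ℓ = M`, the chain is strictly increasing, each `D i` (for `i ≥ 1`) is the
largest submodule of its dimension, and every nonzero submodule which is largest among
submodules of dimension at most its own dimension occurs in the chain. -/
def IsDimFiltration (R : Type*) [CommRing R] (M : Type*) [AddCommGroup M] [Module R M]
    (ℓ : ℕ) (D : Fin (ℓ + 1) → Submodule R M) : Prop :=
  D 0 = ⊥ ∧ D (Fin.last ℓ) = ⊤ ∧ StrictMono D ∧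
  (∀ i : Fin ℓ, IsGreatest
    {N : Submodule R M | moduleDim R ↥N ≤ moduleDim R ↥(D i.succ)} (D i.succ)) ∧
  (∀ N : Submodule R M, N ≠ ⊥ →
    IsGreatest {N' : Submodule R M | moduleDim R ↥N' ≤ moduleDim R ↥N} N → ∃ i, D i = N)

/-- A module over a local ring is sequentially Cohen-Macaulay if the consecutive quotients
of its dimension filtration are Cohen-Macaulay. -/
def IsSeqCM (R : Type*) [CommRing R] [IsLocalRing R] (M : Type*) [AddCommGroup M]
    [Module R M] : Prop :=
  ∃ (ℓ : ℕ) (D : Fin (ℓ + 1) → Submodule R M), IsDimFiltration R M ℓ D ∧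
    ∀ i : Fin ℓ, IsCMModule R
      (↥(D i.succ) ⧸ (D i.castSucc).comap (D i.succ).subtype)

/-- Sequentially Cohen-Macaulay over a not necessarily local ring. -/
def IsSeqCMGen (R : Type*) [CommRing R] (M : Type*) [AddCommGroup M] [Module R M] : Prop :=
  ∃ (ℓ : ℕ) (D : Fin (ℓ + 1) → Submodule R M), IsDimFiltration R M ℓ D ∧
    ∀ i : Fin ℓ, IsCMModuleGen R
      (↥(D i.succ) ⧸ (D i.castSucc).comap (D i.succ).subtype)

/-- A local ring is sequentially Cohen-Macaulay if it is so as a module over itself. -/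
def IsSeqCMRing (R : Type*) [CommRing R] [IsLocalRing R] : Prop := IsSeqCM R R
open Module CategoryTheory Abelian

section Dimension

variable {R : Type*} [CommRing R]

lemma moduleDim_eq_supportDim (A : Type*) [AddCommGroup A] [Module R A] [Module.Finite R A] :
    moduleDim R A = supportDim R A :=
  (supportDim_eq_ringKrullDim_quotient_annihilator (R := R) A).symm

lemma supportDim_le_max {A B C : Type*} [AddCommGroup A] [Module R A] [AddCommGroup B]
    [Module R B] [AddCommGroup C] [Module R C]
    (h : support R C ⊆ support R A ∪ support R B) :
    supportDim R C ≤ max (supportDim R A) (supportDim R B) := by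
  refine iSup_le fun s ↦ ?_
  rcases h s.head.2 with hA | hB
  · exact le_max_of_le_left (Order.LTSeries.length_le_krullDim (α := support R A)
      ⟨s.length, fun i ↦ ⟨(s i).1, mem_support_mono (s.head_le i) hA⟩, fun i ↦ s.step i⟩)
  · exact le_max_of_le_right (Order.LTSeries.length_le_krullDim (α := support R B)
      ⟨s.length, fun i ↦ ⟨(s i).1, mem_support_mono (s.head_le i) hB⟩, fun i ↦ s.step i⟩)

variable {M N : Type*} [AddCommGroup M] [Module R M] [AddCommGroup N] [Module R N]

lemma supportDim_mono {P Q : Submodule R M} (h : P ≤ Q) : supportDim R P ≤ supportDim R Q :=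
  supportDim_le_of_injective _ (Submodule.inclusion_injective h)

lemma supportDim_sup_le (P Q : Submodule R M) :
    supportDim R ↥(P ⊔ Q) ≤ max (supportDim R P) (supportDim R Q) := by
  refine supportDim_le_max fun p hp ↦ ?_
  obtain ⟨⟨x, hx⟩, hxp⟩ := mem_support_iff'.mp hp
  by_contra hn
  rw [Set.mem_union, not_or, notMem_support_iff', notMem_support_iff'] at hn
  obtain ⟨y, hy, z, hz, rfl⟩ := Submodule.mem_sup.mp hx
  obtain ⟨r, hr, hry⟩ := hn.1 ⟨y, hy⟩
  obtain ⟨s, hs, hsz⟩ := hn.2 ⟨z, hz⟩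
  refine hxp (r * s) (p.asIdeal.primeCompl.mul_mem hr hs) (Subtype.ext ?_)
  have h1 : r • y = 0 := congrArg Subtype.val hry
  have h2 : s • z = 0 := congrArg Subtype.val hsz
  change (r * s) • (y + z) = 0
  rw [smul_add, mul_comm, mul_smul, h1, mul_comm, mul_smul, h2, smul_zero, smul_zero, add_zero]

variable (R M) in
/-- The largest submodule of dimension less than `k`. -/
noncomputable def dimLtSubmodule (k : ℕ) : Submodule R M where
  carrier := {x | supportDim R (R ∙ x) < k}
  zero_mem' := by
    have : Subsingleton (R ∙ (0 : M)) := by rw [Submodule.span_zero_singleton]; infer_instance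
    simp [supportDim_eq_bot_of_subsingleton]
  add_mem' {x y} hx hy := by
    refine lt_of_le_of_lt ((supportDim_mono ?_).trans (supportDim_sup_le (R ∙ x) (R ∙ y)))
      (max_lt hx hy)
    rw [Submodule.span_singleton_le_iff_mem]
    exact add_mem (Submodule.mem_sup_left (Submodule.mem_span_singleton_self x))
      (Submodule.mem_sup_right (Submodule.mem_span_singleton_self y))
  smul_mem' r x hx := lt_of_le_of_lt (supportDim_mono (Submodule.span_singleton_smul_le R r x)) hx

lemma mem_dimLtSubmodule {k : ℕ} {x : M} :
    x ∈ dimLtSubmodule R M k ↔ supportDim R (R ∙ x) < k := Iff.rfl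

lemma le_dimLtSubmodule_iff [IsNoetherian R M] {P : Submodule R M} {k : ℕ} :
    P ≤ dimLtSubmodule R M k ↔ supportDim R P < k := by
  refine ⟨fun h ↦ ?_, fun h x hx ↦ lt_of_le_of_lt (supportDim_mono ?_) h⟩
  · refine Submodule.fg_induction
      (motive := fun P _ ↦ P ≤ dimLtSubmodule R M k → supportDim R P < k)
      (fun x hx ↦ hx (Submodule.mem_span_singleton_self x)) (fun P Q _ _ hP hQ hPQ ↦ ?_) P
      (IsNoetherian.noetherian P) h
    rw [sup_le_iff] at hPQ
    exact lt_of_le_of_lt (supportDim_sup_le P Q) (max_lt (hP hPQ.1) (hQ hPQ.2))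
  · rwa [Submodule.span_singleton_le_iff_mem]

lemma supportDim_dimLtSubmodule_lt [IsNoetherian R M] (k : ℕ) :
    supportDim R (dimLtSubmodule R M k) < k :=
  le_dimLtSubmodule_iff.mp le_rfl

lemma dimLtSubmodule_mono : Monotone (dimLtSubmodule R M) := fun _ _ h _ hx ↦
  lt_of_lt_of_le (mem_dimLtSubmodule.mp hx) (Nat.mono_cast h)

lemma map_mem_dimLtSubmodule (f : M →ₗ[R] N) {k : ℕ} {x : M} (hx : x ∈ dimLtSubmodule R M k) :
    f x ∈ dimLtSubmodule R N k := by
  refine lt_of_le_of_lt ?_ (mem_dimLtSubmodule.mp hx)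
  have h : (R ∙ f x) = (R ∙ x).map f := by rw [Submodule.map_span, Set.image_singleton]
  rw [h]
  exact supportDim_le_of_surjective (f.submoduleMap _) (f.submoduleMap_surjective _)

lemma mem_dimLtSubmodule_prod {k : ℕ} {x : M × N} :
    x ∈ dimLtSubmodule R (M × N) k ↔
      x.1 ∈ dimLtSubmodule R M k ∧ x.2 ∈ dimLtSubmodule R N k := by
  refine ⟨fun h ↦ ⟨map_mem_dimLtSubmodule (.fst R M N) h, map_mem_dimLtSubmodule (.snd R M N) h⟩,
    fun h ↦ ?_⟩
  have := add_mem (map_mem_dimLtSubmodule (.inl R M N) h.1)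
    (map_mem_dimLtSubmodule (.inr R M N) h.2)
  simpa using this

variable (R M) in
/-- The part of `M` of dimension exactly `k`: the submodule of dimension at most `k` modulo the
submodule of dimension less than `k`. -/
abbrev dimQuotient (k : ℕ) : Type _ :=
  ↥(dimLtSubmodule R M (k + 1)) ⧸
    (dimLtSubmodule R M k).comap (dimLtSubmodule R M (k + 1)).subtype

variable (R M N) in
lemma nonempty_dimQuotient_prod_equiv (k : ℕ) :
    Nonempty (dimQuotient R (M × N) k ≃ₗ[R] dimQuotient R M k × dimQuotient R N k) := by
  let f : ↥(dimLtSubmodule R (M × N) (k + 1)) →ₗ[R] dimQuotient R M k :=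
    (Submodule.mkQ _).comp
      ((LinearMap.fst R M N).restrict fun _ h ↦ (mem_dimLtSubmodule_prod.mp h).1)
  let g : ↥(dimLtSubmodule R (M × N) (k + 1)) →ₗ[R] dimQuotient R N k :=
    (Submodule.mkQ _).comp
      ((LinearMap.snd R M N).restrict fun _ h ↦ (mem_dimLtSubmodule_prod.mp h).2)
  have hker : (dimLtSubmodule R (M × N) k).comap (dimLtSubmodule R (M × N) (k + 1)).subtype =
      LinearMap.ker (f.prod g) := by
    ext x
    simp only [Submodule.mem_comap, Submodule.subtype_apply, mem_dimLtSubmodule_prod,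
      LinearMap.ker_prod, Submodule.mem_inf, LinearMap.mem_ker, f, g, LinearMap.comp_apply,
      Submodule.mkQ_apply, Submodule.Quotient.mk_eq_zero]
    rfl
  have hsurj : Function.Surjective (f.prod g) := by
    rintro ⟨a, b⟩
    obtain ⟨a, rfl⟩ := Submodule.mkQ_surjective _ a
    obtain ⟨b, rfl⟩ := Submodule.mkQ_surjective _ b
    exact ⟨⟨(a.1, b.1), mem_dimLtSubmodule_prod.mpr ⟨a.2, b.2⟩⟩, rfl⟩
  exact ⟨(Submodule.quotEquivOfEq _ _ hker).trans
    ((f.prod g).quotKerEquivOfSurjective hsurj)⟩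

lemma supportDim_dimQuotient [IsNoetherian R M] (k : ℕ) [Nontrivial (dimQuotient R M k)] :
    supportDim R (dimQuotient R M k) = k := by
  set P := dimLtSubmodule R M (k + 1)
  set Q := (dimLtSubmodule R M k).comap P.subtype
  have hle : supportDim R (P ⧸ Q) ≤ k := ENat.WithBot.lt_add_one_iff.mp <| lt_of_le_of_lt
    (supportDim_le_of_surjective _ Q.mkQ_surjective)
    (mod_cast supportDim_dimLtSubmodule_lt (R := R) (M := M) (k + 1))
  refine le_antisymm hle (le_of_not_gt fun hlt ↦ ?_)
  have hP : supportDim R P < k := by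
    refine lt_of_le_of_lt (supportDim_le_max (support_of_exact (f := Q.subtype) (g := Q.mkQ)
      ?_ Q.subtype_injective Q.mkQ_surjective).subset) (max_lt ?_ hlt)
    · exact LinearMap.exact_subtype_mkQ Q
    · refine lt_of_le_of_lt (supportDim_le_of_injective (N := dimLtSubmodule R M k)
        ((P.subtype.restrict (p := Q) fun _ h ↦ h)) ?_) (supportDim_dimLtSubmodule_lt k)
      intro x y hxy
      exact Subtype.ext (Subtype.ext (congrArg (fun z ↦ z.1) hxy))
  have hQ : Q = ⊤ := by
    rw [eq_top_iff]
    exact fun x _ ↦ le_dimLtSubmodule_iff.mpr hP x.2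
  exact not_subsingleton (P ⧸ Q) (Submodule.Quotient.subsingleton_iff.mpr hQ)

end Dimension

section Depth

universe u v

variable {R : Type u} [CommRing R] [IsLocalRing R]

lemma moduleDepth_congr {A B : Type*} [AddCommGroup A] [Module R A] [AddCommGroup B]
    [Module R B] (e : A ≃ₗ[R] B) : moduleDepth R A = moduleDepth R B := by
  simp only [moduleDepth, e.isRegular_congr]

lemma isCMModule_congr {A B : Type*} [AddCommGroup A] [Module R A] [AddCommGroup B]
    [Module R B] (e : A ≃ₗ[R] B) : IsCMModule R A ↔ IsCMModule R B := by
  rw [IsCMModule, IsCMModule, moduleDepth_congr e, moduleDim, moduleDim, e.annihilator_eq,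
    e.toEquiv.nontrivial_congr]

/-- Vanishing of `Ext` from the residue field in degrees less than `n`. -/
def ExtResidueVanishes [Small.{v} R] (n : ℕ) (A : ModuleCat.{v} R) : Prop :=
  ∀ i < n, Subsingleton (Ext (ModuleCat.of R (Shrink.{v} (R ⧸ maximalIdeal R))) A i)

lemma extResidueVanishes_prod [Small.{v} R] (n : ℕ) (A B : Type v) [AddCommGroup A] [Module R A]
    [AddCommGroup B] [Module R B] :
    ExtResidueVanishes n (ModuleCat.of R (A × B)) ↔
      ExtResidueVanishes n (ModuleCat.of R A) ∧ ExtResidueVanishes n (ModuleCat.of R B) := by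
  simp only [ExtResidueVanishes, ← forall_and]
  refine forall₂_congr fun i _ ↦ ?_
  let X := ModuleCat.of R (Shrink.{v} (R ⧸ maximalIdeal R))
  let e : Ext X (ModuleCat.of R (A × B)) i ≃+ Ext X (ModuleCat.of R A ⊞ ModuleCat.of R B) i :=
    ((extFunctorObj X i).mapIso (ModuleCat.biprodIsoProd
      (ModuleCat.of R A) (ModuleCat.of R B)).symm).addCommGroupIsoToAddEquiv
  rw [(e.trans Ext.addEquivBiprod).subsingleton_congr]
  exact ⟨fun _ ↦ ⟨(Prod.fst_surjective (β := Ext X (ModuleCat.of R B) i)).subsingleton,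
    (Prod.snd_surjective (α := Ext X (ModuleCat.of R A) i)).subsingleton⟩,
    fun ⟨_, _⟩ ↦ inferInstance⟩

lemma extResidueVanishes_of_subsingleton [Small.{v} R] (n : ℕ) (A : ModuleCat.{v} R)
    [Subsingleton A] : ExtResidueVanishes n A := fun i _ ↦
  AddCommGrpCat.subsingleton_of_isZero
    ((extFunctorObj _ i).map_isZero (ModuleCat.isZero_of_subsingleton A))

variable [IsNoetherianRing R]

lemma exists_isRegular_iff_extResidueVanishes [Small.{v} R] (n : ℕ) (A : Type v) [AddCommGroup A]
    [Module R A] [Module.Finite R A] [Nontrivial A] :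
    (∃ rs : List R, rs.length = n ∧ (∀ r ∈ rs, r ∈ maximalIdeal R) ∧
      RingTheory.Sequence.IsRegular A rs) ↔ ExtResidueVanishes n (ModuleCat.of R A) :=
  (ModuleCat.exists_isRegular_tfae (maximalIdeal R) n (ModuleCat.of R A)
    (Submodule.top_ne_ideal_smul_of_le_jacobson_annihilator
      (maximalIdeal_le_jacobson _)).symm.lt_top).out 3 1

lemma moduleDepth_le_supportDim (A : Type v) [AddCommGroup A] [Module R A] [Module.Finite R A]
    [Nontrivial A] {n : ℕ} (h : supportDim R A = n) : moduleDepth R A ≤ n := by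
  refine sSup_le ?_
  rintro _ ⟨rs, rfl, _, hreg⟩
  have h1 := supportDim_add_length_eq_supportDim_of_isRegular rs hreg
  have := hreg.quot_ofList_smul_nontrivial ⊤
  have h2 : supportDim R (A ⧸ Ideal.ofList rs • (⊤ : Submodule R A)) ≠ ⊥ :=
    supportDim_ne_bot_of_nontrivial R _
  rw [h] at h1
  obtain ⟨d, hd⟩ := WithBot.ne_bot_iff_exists.mp h2
  rw [← hd] at h1
  have h3 : d + rs.length = n := by exact_mod_cast h1
  exact h3 ▸ le_add_self

lemma isCMModule_iff_extResidueVanishes [Small.{v} R] (A : Type v) [AddCommGroup A] [Module R A]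
    [Module.Finite R A] {n : ℕ} (h : Nontrivial A → supportDim R A = n) :
    IsCMModule R A ↔ ExtResidueVanishes n (ModuleCat.of R A) := by
  rcases subsingleton_or_nontrivial A with hA | hA
  · exact iff_of_true (fun h ↦ absurd hA (not_subsingleton_iff_nontrivial.mpr h))
      (extResidueVanishes_of_subsingleton n _)
  have hle := moduleDepth_le_supportDim A (h hA)
  rw [← exists_isRegular_iff_extResidueVanishes, IsCMModule, moduleDim_eq_supportDim, h hA]
  refine ⟨fun hd ↦ ?_, fun ⟨rs, hrs⟩ _ ↦ ?_⟩
  · have hd : moduleDepth R A = n := by exact_mod_cast hd hA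
    have : Nonempty {n : ℕ∞ | ∃ rs : List R, (rs.length : ℕ∞) = n ∧
        (∀ r ∈ rs, r ∈ maximalIdeal R) ∧ RingTheory.Sequence.IsRegular A rs} :=
      ⟨0, [], by simp, by simp, .nil R A⟩
    obtain ⟨rs, hlen, hrs⟩ := ENat.sSup_mem_of_nonempty_of_lt_top
      (lt_of_le_of_lt hle (ENat.natCast_lt_top n))
    change _ = moduleDepth R A at hlen
    exact ⟨rs, by exact_mod_cast hlen.trans hd, hrs⟩
  · have : (n : ℕ∞) ≤ moduleDepth R A := le_sSup ⟨rs, by simp [hrs.1], hrs.2⟩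
    exact_mod_cast le_antisymm hle this

lemma isCMModule_prod_iff {A B : Type v} [Small.{v} R] [AddCommGroup A] [Module R A]
    [Module.Finite R A] [AddCommGroup B] [Module R B] [Module.Finite R B] {n : ℕ}
    (hA : Nontrivial A → supportDim R A = n) (hB : Nontrivial B → supportDim R B = n)
    (hAB : Nontrivial (A × B) → supportDim R (A × B) = n) :
    IsCMModule R (A × B) ↔ IsCMModule R A ∧ IsCMModule R B := by
  rw [isCMModule_iff_extResidueVanishes A hA, isCMModule_iff_extResidueVanishes B hB,
    isCMModule_iff_extResidueVanishes (A × B) hAB, extResidueVanishes_prod]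

end Depth

section Filtration

variable {R : Type*} [CommRing R] {M : Type*} [AddCommGroup M] [Module R M] [IsNoetherian R M]

lemma le_dimLtSubmodule_succ_iff {P : Submodule R M} {n : ℕ} :
    P ≤ dimLtSubmodule R M (n + 1) ↔ moduleDim R P ≤ n := by
  rw [le_dimLtSubmodule_iff, moduleDim_eq_supportDim, Nat.cast_add, Nat.cast_one,
    ENat.WithBot.lt_add_one_iff]

lemma isGreatest_moduleDim_iff {P : Submodule R M} {n : ℕ} (h : moduleDim R P = n) :
    IsGreatest {N : Submodule R M | moduleDim R N ≤ moduleDim R P} P ↔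
      P = dimLtSubmodule R M (n + 1) := by
  simp only [h, ← le_dimLtSubmodule_succ_iff]
  exact ⟨fun hP ↦ le_antisymm hP.1 (hP.2 (le_refl (dimLtSubmodule R M (n + 1)))),
    fun hP ↦ hP ▸ ⟨le_refl P, fun _ ↦ id⟩⟩

lemma moduleDim_dimLtSubmodule_succ {n : ℕ}
    (h : dimLtSubmodule R M (n + 1) ≠ dimLtSubmodule R M n) :
    moduleDim R (dimLtSubmodule R M (n + 1)) = n := by
  refine le_antisymm (le_dimLtSubmodule_succ_iff.mp le_rfl) (le_of_not_gt fun hlt ↦ h ?_)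
  rw [moduleDim_eq_supportDim] at hlt
  exact le_antisymm (le_dimLtSubmodule_iff.mpr hlt) (dimLtSubmodule_mono n.le_succ)

variable [IsNoetherianRing R] [IsLocalRing R]

variable (R) in
lemma exists_supportDim_eq_natCast (A : Type*) [AddCommGroup A] [Module R A] [Nontrivial A] :
    ∃ n : ℕ, supportDim R A = n := by
  obtain ⟨d, hd⟩ := WithBot.ne_bot_iff_exists.mp (supportDim_ne_bot_of_nontrivial R A)
  have hlt := lt_of_le_of_lt (supportDim_le_ringKrullDim R A) ringKrullDim_lt_top
  rw [← hd] at hlt ⊢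
  obtain ⟨n, rfl⟩ := ENat.ne_top_iff_exists.mp (show d ≠ ⊤ by rintro rfl; exact lt_irrefl _ hlt)
  exact ⟨n, rfl⟩

lemma exists_moduleDim_eq_natCast {P : Submodule R M} (hP : P ≠ ⊥) :
    ∃ n : ℕ, moduleDim R P = n := by
  have : Nontrivial P := Submodule.nontrivial_iff_ne_bot.mpr hP
  rw [moduleDim_eq_supportDim]
  exact exists_supportDim_eq_natCast R P

variable (R M) in
lemma exists_isDimFiltration : ∃ (ℓ : ℕ) (D : Fin (ℓ + 1) → Submodule R M),
    IsDimFiltration R M ℓ D := by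
  classical
  let S := {P : Submodule R M | IsGreatest {N : Submodule R M | moduleDim R N ≤ moduleDim R P} P}
  have hbot : ⊥ ∈ S := by
    refine ⟨le_refl (moduleDim R _), fun N hN ↦ ?_⟩
    by_contra hne
    have : Nontrivial N := Submodule.nontrivial_iff_ne_bot.mpr fun h ↦ hne h.le
    rw [Set.mem_ofPred_eq, moduleDim_eq_supportDim, moduleDim_eq_supportDim,
      supportDim_eq_bot_of_subsingleton R (⊥ : Submodule R M), le_bot_iff] at hN
    exact supportDim_ne_bot_of_nontrivial R N hN
  have htop : ⊤ ∈ S := ⟨le_refl (moduleDim R _), fun N _ ↦ le_top⟩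
  have hfin : S.Finite := by
    obtain ⟨d, hd⟩ := exists_supportDim_eq_natCast R R
    rw [supportDim_self_eq_ringKrullDim] at hd
    refine (((Set.finite_Iic (d + 1)).image (dimLtSubmodule R M)).union
      (Set.finite_singleton ⊥)).subset fun P hP ↦ ?_
    by_cases h : P = ⊥
    · exact .inr h
    obtain ⟨n, hn⟩ := exists_moduleDim_eq_natCast h
    refine .inl ⟨n + 1, ?_, ((isGreatest_moduleDim_iff hn).mp hP).symm⟩
    have : (n : WithBot ℕ∞) ≤ d := by
      rw [← hn, moduleDim_eq_supportDim]
      exact (supportDim_le_ringKrullDim R P).trans hd.le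
    exact Nat.succ_le_succ (by exact_mod_cast this)
  have hle (a b : S) : a ≤ b ∨ b ≤ a :=
    (le_total (moduleDim R a.1) (moduleDim R b.1)).imp (fun h ↦ b.2.2 h) (fun h ↦ a.2.2 h)
  let _ : LinearOrder S :=
    { (inferInstance : PartialOrder S) with
      le_total := hle
      toDecidableLE := Classical.decRel _ }
  let _ : Fintype S := hfin.fintype
  obtain ⟨ℓ, hℓ⟩ : ∃ ℓ, Fintype.card S = ℓ + 1 :=
    Nat.exists_eq_succ_of_ne_zero (@Fintype.card_ne_zero S _ ⟨⟨⊥, hbot⟩⟩)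
  let e := Fintype.orderIsoFinOfCardEq S hℓ
  have hmono : StrictMono fun i ↦ (e i).1 := fun i j hij ↦ e.strictMono hij
  have h0 : (e 0).1 = ⊥ := le_bot_iff.mp <|
    (e.monotone (Fin.zero_le (e.symm ⟨⊥, hbot⟩))).trans (e.apply_symm_apply ⟨⊥, hbot⟩).le
  have hlast : (e (Fin.last ℓ)).1 = ⊤ := top_le_iff.mp <|
    (e.apply_symm_apply ⟨⊤, htop⟩).ge.trans (e.monotone (Fin.le_last (e.symm ⟨⊤, htop⟩)))
  exact ⟨ℓ, fun i ↦ (e i).1, h0, hlast, hmono, fun i ↦ (e i.succ).2, fun N _ hN ↦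
    ⟨e.symm ⟨N, hN⟩, congrArg Subtype.val (e.apply_symm_apply ⟨N, hN⟩)⟩⟩

namespace IsDimFiltration

variable {ℓ : ℕ} {D : Fin (ℓ + 1) → Submodule R M}

lemma exists_eq_dimLtSubmodule (hD : IsDimFiltration R M ℓ D) (i : Fin ℓ) :
    ∃ n : ℕ, moduleDim R (D i.succ) = n ∧ D i.succ = dimLtSubmodule R M (n + 1) ∧
      D i.castSucc = dimLtSubmodule R M n := by
  obtain ⟨h0, -, hmono, hgr, hall⟩ := hD
  have hne (j : Fin ℓ) : D j.succ ≠ ⊥ := h0 ▸ (hmono j.succ_pos).ne'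
  obtain ⟨n, hn⟩ := exists_moduleDim_eq_natCast (hne i)
  have hi := (isGreatest_moduleDim_iff hn).mp (hgr i)
  have hlt := hmono i.castSucc_lt_succ
  refine ⟨n, hn, hi, le_antisymm ?_ ?_⟩
  · rcases i.castSucc.eq_zero_or_eq_succ with h | ⟨j, hj⟩
    · rw [h, h0]
      exact bot_le
    rw [hj] at hlt ⊢
    obtain ⟨m, hm⟩ := exists_moduleDim_eq_natCast (hne j)
    have hjm := (isGreatest_moduleDim_iff hm).mp (hgr j)
    rw [hi, hjm] at hlt
    have : m + 1 ≤ n := by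
      by_contra! h
      exact hlt.not_ge (dimLtSubmodule_mono (by omega))
    exact hjm ▸ dimLtSubmodule_mono this
  · by_cases hb : dimLtSubmodule R M n = ⊥
    · exact hb ▸ bot_le
    obtain ⟨m, hm⟩ := exists_moduleDim_eq_natCast hb
    have hmn : m < n := by
      have := supportDim_dimLtSubmodule_lt (R := R) (M := M) n
      rw [← moduleDim_eq_supportDim, hm] at this
      exact_mod_cast this
    obtain ⟨j, hj⟩ := hall _ hb ((isGreatest_moduleDim_iff hm).mpr (le_antisymm
      (le_dimLtSubmodule_succ_iff.mpr hm.le) (dimLtSubmodule_mono hmn)))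
    rw [← hj]
    refine hmono.monotone (Fin.le_castSucc_iff.mpr (hmono.lt_iff_lt.mp ?_))
    rw [hj, hi]
    refine lt_of_le_of_ne (dimLtSubmodule_mono n.le_succ) fun h ↦ ?_
    rw [h, ← hi, hn] at hm
    exact hmn.ne' (by exact_mod_cast hm)

lemma forall_isCMModule_iff (hD : IsDimFiltration R M ℓ D) :
    (∀ i : Fin ℓ, IsCMModule R (↥(D i.succ) ⧸ (D i.castSucc).comap (D i.succ).subtype)) ↔
      ∀ n, IsCMModule R (dimQuotient R M n) := by
  refine ⟨fun h n ↦ ?_, fun h i ↦ ?_⟩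
  · by_cases hn : dimLtSubmodule R M (n + 1) = dimLtSubmodule R M n
    · intro hnt
      refine absurd (Submodule.Quotient.subsingleton_iff.mpr ?_)
        (not_subsingleton_iff_nontrivial.mpr hnt)
      rw [hn, Submodule.comap_subtype_self]
    · have hdim := moduleDim_dimLtSubmodule_succ hn
      have hb : dimLtSubmodule R M (n + 1) ≠ ⊥ := fun hb ↦
        hn (le_antisymm (hb ▸ bot_le) (dimLtSubmodule_mono n.le_succ))
      obtain ⟨j, hj⟩ := hD.2.2.2.2 _ hb ((isGreatest_moduleDim_iff hdim).mpr rfl)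
      rcases j.eq_zero_or_eq_succ with rfl | ⟨i, rfl⟩
      · exact absurd (hj.symm.trans hD.1) hb
      obtain ⟨m, hm, h1, h2⟩ := hD.exists_eq_dimLtSubmodule i
      rw [hj, hdim] at hm
      obtain rfl : n = m := by exact_mod_cast hm
      have := h i
      rwa [h1, h2] at this
  · obtain ⟨n, -, h1, h2⟩ := hD.exists_eq_dimLtSubmodule i
    rw [h1, h2]
    exact h n

end IsDimFiltration

variable (R M) in
lemma isSeqCM_iff_forall_dimQuotient :
    IsSeqCM R M ↔ ∀ n, IsCMModule R (dimQuotient R M n) := by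
  refine ⟨fun ⟨_, _, hD, h⟩ ↦ hD.forall_isCMModule_iff.mp h, fun h ↦ ?_⟩
  obtain ⟨ℓ, D, hD⟩ := exists_isDimFiltration R M
  exact ⟨ℓ, D, hD, hD.forall_isCMModule_iff.mpr h⟩

end Filtration

universe u v w in
lemma isCMModule_dimQuotient_prod_iff (R : Type u) [CommRing R] [IsNoetherianRing R]
    [IsLocalRing R] (M : Type v) (N : Type w) [AddCommGroup M] [Module R M] [Module.Finite R M]
    [AddCommGroup N] [Module R N] [Module.Finite R N] (n : ℕ) :
    IsCMModule R (dimQuotient R (M × N) n) ↔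
      IsCMModule R (dimQuotient R M n) ∧ IsCMModule R (dimQuotient R N n) := by
  let eM : ULift.{max u v w} (dimQuotient R M n) ≃ₗ[R] dimQuotient R M n := ULift.moduleEquiv
  let eN : ULift.{max u v w} (dimQuotient R N n) ≃ₗ[R] dimQuotient R N n := ULift.moduleEquiv
  let e := (nonempty_dimQuotient_prod_equiv R M N n).some.trans (eM.prodCongr eN).symm
  have : Small.{max u v w} R := small_max.{max v w} R
  rw [isCMModule_congr e, ← isCMModule_congr eM, ← isCMModule_congr eN]
  refine isCMModule_prod_iff (n := n) (fun h ↦ ?_) (fun h ↦ ?_) (fun h ↦ ?_)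
  · have := eM.toEquiv.nontrivial_congr.mp h
    rw [supportDim_eq_of_equiv eM, supportDim_dimQuotient]
  · have := eN.toEquiv.nontrivial_congr.mp h
    rw [supportDim_eq_of_equiv eN, supportDim_dimQuotient]
  · have := e.toEquiv.nontrivial_congr.mpr h
    rw [← supportDim_eq_of_equiv e, supportDim_dimQuotient]

/-- `M ⊕ N` is sequentially Cohen-Macaulay iff both `M` and `N` are. -/
theorem stmt3 (R : Type*) [CommRing R] [IsNoetherianRing R] [IsLocalRing R]
    (M N : Type*) [AddCommGroup M] [Module R M] [Module.Finite R M] [Nontrivial M]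
    [AddCommGroup N] [Module R N] [Module.Finite R N] [Nontrivial N] :
    IsSeqCM R (M × N) ↔ IsSeqCM R M ∧ IsSeqCM R N := by
  simp only [isSeqCM_iff_forall_dimQuotient, isCMModule_dimQuotient_prod_iff, forall_and]
end

section
/- Let R be a Noetherian local ring, A a Noetherian local module-finite R-algebra, and M a finitely generated A-module such that R is a direct summand of M as an R-module. If M is a sequentially Cohen-Macaulay A-module, then R is a sequentially Cohen-Macaulay local ring. -/
open IsLocalRing

theorem ringKrullDim_eq_of_isIntegral_of_injective (R S : Type*) [CommRing R] [CommRing S]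
    [Algebra R S] [Algebra.IsIntegral R S] (h : Function.Injective (algebraMap R S)) :
    ringKrullDim R = ringKrullDim S := by
  apply le_antisymm
  · refine iSup_le fun l => ?_
    obtain ⟨Q, -, hQ, hQl⟩ := Ideal.exists_ideal_over_prime_of_isIntegral (S := S)
      l.head.asIdeal ⊥ (by rw [← RingHom.ker_eq_comap_bot,
        (RingHom.injective_iff_ker_eq_bot _).1 h]; exact bot_le)
    have : Q.LiesOver l.head.asIdeal := ⟨hQl.symm⟩
    obtain ⟨L, hL, -⟩ := Ideal.exists_ltSeries_of_hasGoingUp l Q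
    rw [← hL]
    exact le_iSup (fun p : LTSeries (PrimeSpectrum S) => ((p.length : ℕ∞) : WithBot ℕ∞)) L
  · refine Order.krullDim_le_of_strictMono (PrimeSpectrum.comap (algebraMap R S)) ?_
    intro p q hpq
    obtain ⟨hle, x, hx, hx'⟩ := SetLike.lt_iff_le_and_exists.mp
      (show p.asIdeal < q.asIdeal from hpq)
    exact Ideal.comap_lt_comap_of_integral_mem_sdiff hle ⟨hx, hx'⟩
      (Algebra.IsIntegral.isIntegral x)

theorem ringKrullDim_quotient_le_max_of_mul_le {R : Type*} [CommRing R] {I J K : Ideal R}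
    (h : I * J ≤ K) :
    ringKrullDim (R ⧸ K) ≤ max (ringKrullDim (R ⧸ I)) (ringKrullDim (R ⧸ J)) := by
  simp only [ringKrullDim_quotient]
  refine iSup_le fun l => ?_
  have key : ∀ I' : Ideal R, I' ≤ l.head.1.asIdeal →
      ((l.length : ℕ∞) : WithBot ℕ∞) ≤
        Order.krullDim (PrimeSpectrum.zeroLocus (R := R) (I' : Set R)) := by
    intro I' hI'
    let L : LTSeries (PrimeSpectrum.zeroLocus (R := R) (I' : Set R)) :=
      { length := l.length
        toFun := fun i => ⟨(l i).1, hI'.trans (l.head_le i)⟩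
        step := fun i => l.step i }
    exact le_iSup (fun p : LTSeries _ => ((p.length : ℕ∞) : WithBot ℕ∞)) L
  rcases (l.head.1.isPrime.mul_le).1 (h.trans l.head.2) with h' | h'
  · exact le_max_of_le_left (key I h')
  · exact le_max_of_le_right (key J h')

theorem moduleDim_le_of_annihilator_le {R M N : Type*} [CommRing R] [AddCommGroup M] [Module R M]
    [AddCommGroup N] [Module R N] (h : Module.annihilator R N ≤ Module.annihilator R M) :
    moduleDim R M ≤ moduleDim R N :=
  ringKrullDim_le_of_surjective (Ideal.Quotient.factor h) (Ideal.Quotient.factor_surjective h)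

theorem moduleDim_le_of_injective {R M N : Type*} [CommRing R] [AddCommGroup M] [Module R M]
    [AddCommGroup N] [Module R N] (f : M →ₗ[R] N) (hf : Function.Injective f) :
    moduleDim R M ≤ moduleDim R N :=
  moduleDim_le_of_annihilator_le (f.annihilator_le_of_injective hf)

theorem moduleDim_le_of_surjective {R M N : Type*} [CommRing R] [AddCommGroup M] [Module R M]
    [AddCommGroup N] [Module R N] (f : M →ₗ[R] N) (hf : Function.Surjective f) :
    moduleDim R N ≤ moduleDim R M :=
  moduleDim_le_of_annihilator_le (f.annihilator_le_of_surjective hf)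

theorem moduleDim_mono {R M : Type*} [CommRing R] [AddCommGroup M] [Module R M]
    {N P : Submodule R M} (h : N ≤ P) : moduleDim R N ≤ moduleDim R P :=
  moduleDim_le_of_injective _ (Submodule.inclusion_injective h)

theorem moduleDim_sup_le {R M : Type*} [CommRing R] [AddCommGroup M] [Module R M]
    (N P : Submodule R M) :
    moduleDim R ↥(N ⊔ P) ≤ max (moduleDim R N) (moduleDim R P) := by
  refine ringKrullDim_quotient_le_max_of_mul_le (Ideal.mul_le_inf.trans_eq ?_)
  exact (Submodule.annihilator_sup N P).symm

/-- The dimension of a module over an integral algebra agrees with its dimension over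
the base ring. -/
theorem moduleDim_restrictScalars (R A : Type*) [CommRing R] [CommRing A] [Algebra R A]
    [Algebra.IsIntegral R A] (M : Type*) [AddCommGroup M] [Module A M] [Module R M]
    [IsScalarTower R A M] : moduleDim A M = moduleDim R M := by
  have h : Module.annihilator R M = (Module.annihilator A M).comap (algebraMap R A) := by
    ext r; simp [Module.mem_annihilator]
  symm
  rw [moduleDim, h]
  exact ringKrullDim_eq_of_isIntegral_of_injective _ (A ⧸ Module.annihilator A M)
    Ideal.algebraMap_quotient_injective

theorem moduleDim_span {R A M : Type*} [CommRing R] [CommRing A] [Algebra R A]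
    [Algebra.IsIntegral R A] [AddCommGroup M] [Module A M] [Module R M] [IsScalarTower R A M]
    (L : Submodule R M) :
    moduleDim A (Submodule.span A (L : Set M)) = moduleDim R L := by
  rw [moduleDim_restrictScalars R A]
  refine le_antisymm (moduleDim_le_of_annihilator_le fun r hr => ?_)
    (moduleDim_le_of_injective (N := Submodule.span A (L : Set M))
      { toFun := fun x => ⟨x, Submodule.subset_span x.2⟩
        map_add' := fun _ _ => rfl
        map_smul' := fun _ _ => rfl } fun _ _ hxy => Subtype.ext (Subtype.mk.inj hxy))
  rw [Module.mem_annihilator] at hr ⊢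
  rintro ⟨m, hm⟩
  ext
  change r • m = 0
  induction hm using Submodule.span_induction with
  | mem x hx => exact congrArg Subtype.val (hr ⟨x, hx⟩)
  | zero => simp
  | add x y _ _ hx hy => rw [smul_add, hx, hy, add_zero]
  | smul a x _ hx => rw [smul_comm, hx, smul_zero]

/-- There is a weakly `M`-regular sequence of length `n` with entries in `I`. -/
def HasRegularSeq {R : Type*} [CommRing R] (I : Ideal R) (M : Type*) [AddCommGroup M]
    [Module R M] (n : ℕ) : Prop :=
  ∃ rs : List R, rs.length = n ∧ (∀ r ∈ rs, r ∈ I) ∧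
    RingTheory.Sequence.IsWeaklyRegular M rs

section HasRegularSeq

open scoped Pointwise

variable {R : Type*} [CommRing R] {I : Ideal R} {M N : Type*} [AddCommGroup M] [Module R M]
  [AddCommGroup N] [Module R N]

theorem HasRegularSeq.zero : HasRegularSeq I M 0 :=
  ⟨[], rfl, by simp, .nil R M⟩

theorem hasRegularSeq_succ_iff {n : ℕ} :
    HasRegularSeq I M (n + 1) ↔
      ∃ x ∈ I, IsSMulRegular M x ∧ HasRegularSeq I (QuotSMulTop x M) n := by
  constructor
  · rintro ⟨rs, hl, hI, hr⟩
    match rs, hl, hI, hr with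
    | x :: rs, hl, hI, hr =>
      rw [RingTheory.Sequence.isWeaklyRegular_cons_iff] at hr
      exact ⟨x, hI x (by simp), hr.1, rs, by simpa using hl,
        fun r h => hI r (List.mem_cons_of_mem _ h), hr.2⟩
  · rintro ⟨x, hx, hxM, rs, hl, hI, hr⟩
    exact ⟨x :: rs, by simp [hl], by simpa [hx] using hI, hr.cons hxM⟩

theorem HasRegularSeq.of_equiv {n : ℕ} (e : M ≃ₗ[R] N) (h : HasRegularSeq I M n) :
    HasRegularSeq I N n := by
  obtain ⟨rs, hl, hI, hr⟩ := h
  exact ⟨rs, hl, hI, (e.isWeaklyRegular_congr rs).1 hr⟩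

theorem IsSMulRegular.of_retract {x : R} (i : N →ₗ[R] M) (p : M →ₗ[R] N)
    (h : p ∘ₗ i = LinearMap.id) (hx : IsSMulRegular M x) : IsSMulRegular N x :=
  hx.of_injective i (Function.LeftInverse.injective (LinearMap.congr_fun h))

theorem HasRegularSeq.of_retract {n : ℕ} (i : N →ₗ[R] M) (p : M →ₗ[R] N)
    (h : p ∘ₗ i = LinearMap.id) (hM : HasRegularSeq I M n) : HasRegularSeq I N n := by
  induction n generalizing M N with
  | zero => exact .zero
  | succ n ih =>
    obtain ⟨x, hx, hxM, hn⟩ := hasRegularSeq_succ_iff.1 hM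
    refine hasRegularSeq_succ_iff.2 ⟨x, hx, hxM.of_retract i p h,
      ih (QuotSMulTop.map x i) (QuotSMulTop.map x p) ?_ hn⟩
    rw [← QuotSMulTop.map_comp, h, QuotSMulTop.map_id]

theorem exists_ne_zero_le_annihilator_of_forall_not_isSMulRegular [IsNoetherianRing R]
    [Module.Finite R M] (h : ∀ x ∈ I, ¬ IsSMulRegular M x) :
    ∃ u : M, u ≠ 0 ∧ ∀ x ∈ I, x • u = 0 := by
  have hsub : (I : Set R) ⊆ ⋃ p ∈ associatedPrimes R M, (p : Set R) := by
    rw [biUnion_associatedPrimes_eq_compl_regular]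
    exact h
  obtain ⟨p, hp, hIp⟩ := (Ideal.subset_union_prime_finite (associatedPrimes.finite R M)
    (f := id) 0 0 fun _ h _ _ => h.1).1 hsub
  obtain ⟨hprime, u, hu⟩ := isAssociatedPrime_iff.1 hp
  refine ⟨u, ?_, fun x hx => ?_⟩
  · rintro rfl
    exact hprime.ne_top (hu.trans (by ext; simp [Submodule.mem_colon_singleton]))
  · have := hIp hx
    rw [id, hu, Submodule.mem_colon_singleton] at this
    simpa using this

/-- A common regular element on two modules. -/
theorem exists_isSMulRegular_and_isSMulRegular [IsNoetherianRing R] [Module.Finite R M]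
    [Module.Finite R N] (hM : ∃ x ∈ I, IsSMulRegular M x) (hN : ∃ x ∈ I, IsSMulRegular N x) :
    ∃ x ∈ I, IsSMulRegular M x ∧ IsSMulRegular N x := by
  by_contra! hcon
  obtain ⟨u, hu, hIu⟩ := exists_ne_zero_le_annihilator_of_forall_not_isSMulRegular
    (I := I) (M := M × N) fun x hx hreg => hcon x hx
      (hreg.of_injective (LinearMap.inl R M N) LinearMap.inl_injective)
      (hreg.of_injective (LinearMap.inr R M N) LinearMap.inr_injective)
  obtain ⟨x, hx, hxM⟩ := hM
  obtain ⟨y, hy, hyN⟩ := hN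
  exact hu (Prod.ext (hxM.right_eq_zero_of_smul (congrArg Prod.fst (hIu x hx)))
    (hyN.right_eq_zero_of_smul (congrArg Prod.snd (hIu y hy))))

theorem exists_isSMulRegular_quotSMulTop [IsNoetherianRing R] [Module.Finite R M] {x y : R}
    (hyI : y ∈ I) (hx : IsSMulRegular M x) (hy : IsSMulRegular M y)
    (h : ∃ z ∈ I, IsSMulRegular (QuotSMulTop y M) z) :
    ∃ z ∈ I, IsSMulRegular (QuotSMulTop x M) z := by
  by_contra! hcon
  obtain ⟨u, hu, hIu⟩ := exists_ne_zero_le_annihilator_of_forall_not_isSMulRegular hcon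
  obtain ⟨u, rfl⟩ := Submodule.mkQ_surjective _ u
  have mem (a : R) (m : M) : Submodule.mkQ (a • (⊤ : Submodule R M)) m = 0 ↔
      ∃ w, a • w = m := by
    simp [Submodule.mem_smul_pointwise_iff_exists]
  obtain ⟨w, hw⟩ := (mem x _).1 ((map_smul _ y u).trans (hIu y hyI))
  obtain ⟨z, hzI, hz⟩ := h
  refine hu ((mem x u).2 ?_)
  have hw0 : Submodule.mkQ (y • (⊤ : Submodule R M)) w = 0 := by
    refine hz.right_eq_zero_of_smul ?_
    obtain ⟨v, hv⟩ := (mem x _).1 ((map_smul _ z u).trans (hIu z hzI))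
    refine (map_smul _ z w).symm.trans ((mem y _).2 ⟨v, hx ?_⟩)
    change x • y • v = x • z • w
    rw [smul_comm x y, hv, smul_comm x z, hw, smul_comm]
  obtain ⟨v, hv⟩ := (mem y w).1 hw0
  refine ⟨v, hy ?_⟩
  change y • x • v = y • u
  rw [smul_comm, hv, hw]

/-- The quotient of `M / xM` by `y` is `M / (xM + yM)`. -/
noncomputable def quotSMulTopQuotSMulTopEquivSup (x y : R) (M : Type*) [AddCommGroup M]
    [Module R M] :
    QuotSMulTop y (QuotSMulTop x M) ≃ₗ[R] M ⧸ (x • ⊤ ⊔ y • ⊤ : Submodule R M) :=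
  Submodule.quotEquivOfEq _ _
      (by rw [Submodule.map_pointwise_smul, Submodule.map_top, Submodule.range_mkQ]) ≪≫ₗ
    Submodule.quotientQuotientEquivQuotientSup (x • ⊤ : Submodule R M) (y • ⊤)

/-- Iterated quotients by two elements do not depend on the order. -/
noncomputable def quotSMulTopSwap (x y : R) (M : Type*) [AddCommGroup M] [Module R M] :
    QuotSMulTop x (QuotSMulTop y M) ≃ₗ[R] QuotSMulTop y (QuotSMulTop x M) :=
  quotSMulTopQuotSMulTopEquivSup y x M ≪≫ₗ Submodule.quotEquivOfEq _ _ (sup_comm _ _) ≪≫ₗ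
    (quotSMulTopQuotSMulTopEquivSup x y M).symm

variable [IsLocalRing R]

theorem isSMulRegular_swap [IsNoetherianRing R] [Module.Finite R M] {x y : R}
    (hx : x ∈ maximalIdeal R) (hy : y ∈ maximalIdeal R)
    (hxM : IsSMulRegular M x) (hyM : IsSMulRegular (QuotSMulTop x M) y) :
    IsSMulRegular M y ∧ IsSMulRegular (QuotSMulTop y M) x := by
  have h : RingTheory.Sequence.IsWeaklyRegular M [x, y] := by
    simp [RingTheory.Sequence.isWeaklyRegular_cons_iff, hxM, hyM]
  simpa [RingTheory.Sequence.isWeaklyRegular_cons_iff] using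
    IsLocalRing.isWeaklyRegular_of_perm_of_subset_maximalIdeal h (List.Perm.swap y x [])
      (List.forall_mem_cons.2 ⟨hx, List.forall_mem_singleton.2 hy⟩)

/-- Modulo a regular element of `I ≤ 𝔪`, the depth in `I` drops by at most one. -/
theorem HasRegularSeq.quotSMulTop [IsNoetherianRing R] [Module.Finite R M]
    (hI : I ≤ maximalIdeal R) {n : ℕ} (h : HasRegularSeq I M (n + 1)) {x : R} (hxI : x ∈ I)
    (hx : IsSMulRegular M x) : HasRegularSeq I (QuotSMulTop x M) n := by
  induction n generalizing M x with
  | zero => exact .zero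
  | succ n ih =>
    obtain ⟨y, hyI, hy, hn⟩ := hasRegularSeq_succ_iff.1 h
    obtain ⟨z, hzI, hz, -⟩ := hasRegularSeq_succ_iff.1 hn
    obtain ⟨z, hzI, hzx, hzy⟩ := exists_isSMulRegular_and_isSMulRegular
      (exists_isSMulRegular_quotSMulTop hyI hx hy ⟨z, hzI, hz⟩) ⟨z, hzI, hz⟩
    obtain ⟨hzM, hxz⟩ := isSMulRegular_swap (hI hxI) (hI hzI) hx hzx
    obtain ⟨-, hyz⟩ := isSMulRegular_swap (hI hyI) (hI hzI) hy hzy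
    have h1 : HasRegularSeq I (QuotSMulTop z M) (n + 1) :=
      hasRegularSeq_succ_iff.2 ⟨y, hyI, hyz, (ih hn hzI hzy).of_equiv (quotSMulTopSwap z y M)⟩
    exact hasRegularSeq_succ_iff.2
      ⟨z, hzI, hzx, (ih h1 hxI hxz).of_equiv (quotSMulTopSwap x z M)⟩

end HasRegularSeq

section Depth

variable {R : Type*} [CommRing R] [IsLocalRing R] {M : Type*} [AddCommGroup M] [Module R M]

theorem HasRegularSeq.le_moduleDepth [Module.Finite R M] [Nontrivial M] {n : ℕ}
    (h : HasRegularSeq (maximalIdeal R) M n) : (n : ℕ∞) ≤ moduleDepth R M := by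
  obtain ⟨rs, rfl, hI, hr⟩ := h
  exact le_sSup ⟨rs, rfl, hI, .of_isWeaklyRegular_of_mem_maximalIdeal M hI hr⟩

theorem hasRegularSeq_of_moduleDepth_eq [Nontrivial M] {n : ℕ}
    (h : moduleDepth R M = n) : HasRegularSeq (maximalIdeal R) M n := by
  have : Nonempty {n : ℕ∞ | ∃ rs : List R, (rs.length : ℕ∞) = n ∧
      (∀ r ∈ rs, r ∈ maximalIdeal R) ∧ RingTheory.Sequence.IsRegular M rs} :=
    ⟨⟨0, [], by simp, by simp, .nil R M⟩⟩
  obtain ⟨rs, hl, hI, hr⟩ :=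
    ENat.sSup_mem_of_nonempty_of_lt_top (h.trans_lt (ENat.natCast_lt_top n))
  exact ⟨rs, by exact_mod_cast hl.trans h, hI, hr.toIsWeaklyRegular⟩

theorem moduleDepth_le_moduleDim [IsNoetherianRing R] [Module.Finite R M] [Nontrivial M] :
    (moduleDepth R M : WithBot ℕ∞) ≤ moduleDim R M := by
  rw [moduleDim, ← Module.supportDim_eq_ringKrullDim_quotient_annihilator]
  obtain ⟨d, hd⟩ := WithBot.ne_bot_iff_exists.1 (Module.supportDim_ne_bot_of_nontrivial R M)
  rw [← hd, WithBot.coe_le_coe]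
  refine sSup_le ?_
  rintro _ ⟨rs, rfl, -, hr⟩
  have := hr.quot_ofList_smul_nontrivial ⊤
  obtain ⟨e, he⟩ := WithBot.ne_bot_iff_exists.1 (Module.supportDim_ne_bot_of_nontrivial R
    (M ⧸ (Ideal.ofList rs • ⊤ : Submodule R M)))
  have hadd := Module.supportDim_add_length_eq_supportDim_of_isRegular rs hr
  rw [← hd, ← he] at hadd
  have : e + rs.length = d := by exact_mod_cast hadd
  exact this ▸ le_add_self

theorem moduleDim_lt_top [IsNoetherianRing R] : moduleDim R M < ⊤ :=
  (ringKrullDim_quotient_le _).trans_lt ringKrullDim_lt_top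

end Depth

section Descent

variable {R A : Type*} [CommRing R] [IsLocalRing R] [CommRing A] [IsLocalRing A] [Algebra R A]

theorem maximalIdeal_le_radical_map_of_isIntegral [Algebra.IsIntegral R A] :
    maximalIdeal A ≤ ((maximalIdeal R).map (algebraMap R A)).radical := by
  rw [Ideal.radical_eq_sInf]
  refine le_sInf ?_
  rintro P ⟨hP, hprime⟩
  have hcomap : P.comap (algebraMap R A) = maximalIdeal R :=
    ((maximalIdeal.isMaximal R).eq_of_le (Ideal.IsPrime.ne_top inferInstance)
      (Ideal.map_le_iff_le_comap.1 hP)).symm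
  have : P.IsMaximal := Ideal.isMaximal_of_isIntegral_of_isMaximal_comap P
    (hcomap ▸ maximalIdeal.isMaximal R)
  exact (IsLocalRing.eq_maximalIdeal this).ge

theorem algebraMap_mem_maximalIdeal_of_isIntegral [Algebra.IsIntegral R A] {x : R}
    (hx : x ∈ maximalIdeal R) : algebraMap R A x ∈ maximalIdeal A := by
  have := Ideal.isMaximal_comap_of_isIntegral_of_isMaximal (R := R) (maximalIdeal A)
  rwa [← IsLocalRing.eq_maximalIdeal this] at hx

variable [IsNoetherianRing R] [Module.Finite R A] {N : Type*} [AddCommGroup N] [Module A N]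
  [Module R N] [IsScalarTower R A N]

theorem exists_isSMulRegular_of_exists_isSMulRegular_algebra [Module.Finite A N]
    (h : ∃ x ∈ maximalIdeal A, IsSMulRegular N x) :
    ∃ y ∈ maximalIdeal R, IsSMulRegular N y := by
  have : Module.Finite R N := Module.Finite.trans A N
  by_contra! hcon
  obtain ⟨u, hu, hIu⟩ := exists_ne_zero_le_annihilator_of_forall_not_isSMulRegular hcon
  obtain ⟨x, hx, hxN⟩ := h
  obtain ⟨k, hk⟩ := maximalIdeal_le_radical_map_of_isIntegral (R := R) hx
  have hle : (maximalIdeal R).map (algebraMap R A) ≤ (Submodule.span A {u}).annihilator :=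
    Ideal.map_le_iff_le_comap.2 fun y hy => by
      simpa [Submodule.mem_annihilator_span_singleton] using hIu y hy
  exact hu ((hxN.pow k).right_eq_zero_of_smul
    ((Submodule.mem_annihilator_span_singleton _ _).1 (hle hk)))

theorem HasRegularSeq.restrictScalars [IsNoetherianRing A] [Module.Finite A N] {n : ℕ}
    (h : HasRegularSeq (maximalIdeal A) N n) : HasRegularSeq (maximalIdeal R) N n := by
  suffices ∃ rs : List R, rs.length = n ∧ (∀ r ∈ rs, r ∈ maximalIdeal R) ∧
      RingTheory.Sequence.IsWeaklyRegular N (rs.map (algebraMap R A)) by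
    obtain ⟨rs, hl, hI, hr⟩ := this
    exact ⟨rs, hl, hI, (RingTheory.Sequence.isWeaklyRegular_map_algebraMap_iff A N rs).1 hr⟩
  induction n generalizing N with
  | zero => exact ⟨[], rfl, by simp, .nil A N⟩
  | succ n ih =>
    obtain ⟨x, hx, hxN, -⟩ := hasRegularSeq_succ_iff.1 h
    obtain ⟨y, hy, hyN⟩ := exists_isSMulRegular_of_exists_isSMulRegular_algebra
      (R := R) ⟨x, hx, hxN⟩
    have hyN' : IsSMulRegular N (algebraMap R A y) := (isSMulRegular_algebraMap_iff A).2 hyN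
    obtain ⟨rs, hl, hI, hr⟩ := ih (h.quotSMulTop le_rfl
      (algebraMap_mem_maximalIdeal_of_isIntegral hy) hyN')
    exact ⟨y :: rs, by simp [hl], List.forall_mem_cons.2 ⟨hy, hI⟩, hr.cons hyN'⟩

theorem IsCMModule.of_retract [IsNoetherianRing A] [Module.Finite A N] {K : Type*}
    [AddCommGroup K] [Module R K] (i : K →ₗ[R] N) (p : N →ₗ[R] K)
    (h : p ∘ₗ i = LinearMap.id) (hN : IsCMModule A N) : IsCMModule R K := by
  intro hK
  have hi : Function.Injective i := Function.LeftInverse.injective (LinearMap.congr_fun h)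
  have hp : Function.Surjective p := Function.RightInverse.surjective (LinearMap.congr_fun h)
  have : Nontrivial N := hi.nontrivial
  have : Module.Finite R N := Module.Finite.trans A N
  have : Module.Finite R K := Module.Finite.of_surjective p hp
  refine le_antisymm moduleDepth_le_moduleDim ?_
  have hd := hN ‹_›
  have hlt : moduleDepth A N ≠ ⊤ := fun htop => by
    have := moduleDim_lt_top (R := A) (M := N)
    rw [← hd, htop] at this
    exact lt_irrefl _ this
  obtain ⟨n, hn⟩ := ENat.ne_top_iff_exists.1 hlt
  calc moduleDim R K ≤ moduleDim R N := moduleDim_le_of_injective i hi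
    _ = moduleDim A N := (moduleDim_restrictScalars R A N).symm
    _ = moduleDepth A N := hd.symm
    _ ≤ moduleDepth R K := WithBot.coe_le_coe.2 <| hn ▸
      ((hasRegularSeq_of_moduleDepth_eq hn.symm).restrictScalars.of_retract i p h).le_moduleDepth

end Descent

/-- Removing repetitions from a finite monotone sequence. -/
theorem exists_strictMono_of_monotone {α : Type*} [PartialOrder α] {n : ℕ}
    (f : Fin (n + 1) → α) (hf : Monotone f) :
    ∃ (k : ℕ) (g : Fin (k + 1) → α), StrictMono g ∧ Set.range g = Set.range f ∧
      g 0 = f 0 ∧ g (Fin.last k) = f (Fin.last n) ∧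
      ∀ i : Fin k, ∃ j : Fin n, g i.castSucc = f j.castSucc ∧ g i.succ = f j.succ := by
  induction n with
  | zero =>
    refine ⟨0, f, fun i j hij => absurd hij ?_, rfl, rfl, rfl, fun i => i.elim0⟩
    simp [Fin.fin_one_eq_zero i, Fin.fin_one_eq_zero j]
  | succ n ih =>
    obtain ⟨k, g, hg, hrange, h0, hlast, hstep⟩ :=
      ih (fun i => f i.castSucc) (hf.comp Fin.strictMono_castSucc.monotone)
    have hfr : Set.range f = insert (f (Fin.last _)) (Set.range fun i : Fin (n + 1) =>
        f i.castSucc) := by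
      ext a
      simp [Fin.exists_fin_succ', or_comm, eq_comm]
    rcases (hf (Fin.last n).castSucc_lt_last.le).eq_or_lt with heq | hlt
    · refine ⟨k, g, hg, ?_, h0, hlast.trans heq, fun i => ?_⟩
      · rw [hfr, hrange, Set.insert_eq_of_mem (Set.mem_range.2 ⟨Fin.last n, heq⟩)]
      · obtain ⟨j, hj, hj'⟩ := hstep i
        exact ⟨j.castSucc, hj, hj'⟩
    · refine ⟨k + 1, Fin.snoc g (f (Fin.last _)), Fin.strictMono_iff_lt_succ.2 fun i => ?_,
        ?_, ?_, by simp, fun i => ?_⟩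
      · induction i using Fin.lastCases with
        | last => simpa [hlast] using hlt
        | cast i =>
          rw [← Fin.castSucc_succ, Fin.snoc_castSucc, Fin.snoc_castSucc]
          exact hg i.castSucc_lt_succ
      · rw [hfr, Fin.range_snoc, hrange]
      · rw [← Fin.castSucc_zero, Fin.snoc_castSucc, h0]
        rfl
      · induction i using Fin.lastCases with
        | last => exact ⟨Fin.last n, by simp [hlast]⟩
        | cast i =>
          obtain ⟨j, hj, hj'⟩ := hstep i
          refine ⟨j.castSucc, ?_, ?_⟩
          · rw [Fin.snoc_castSucc, hj]
          · rw [← Fin.castSucc_succ, Fin.snoc_castSucc, hj', Fin.castSucc_succ]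

theorem moduleDim_comap_le {R A M : Type*} [CommRing R] [CommRing A] [Algebra R A]
    [AddCommGroup M] [Module A M] [Module R M] [IsScalarTower R A M]
    {ι : R →ₗ[R] M} (hι : Function.Injective ι) (N : Submodule A M) :
    moduleDim R ((N.restrictScalars R).comap ι) ≤ moduleDim R N :=
  moduleDim_le_of_injective (N := N.restrictScalars R)
    (ι.restrict (q := N.restrictScalars R) fun _ hx => hx)
    fun _ _ hxy => Subtype.ext (hι (Subtype.mk.inj hxy))

theorem IsCMModule.comap_subquotient {R A M : Type*} [CommRing R] [IsNoetherianRing R]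
    [IsLocalRing R] [CommRing A] [IsNoetherianRing A] [IsLocalRing A] [Algebra R A]
    [Module.Finite R A] [AddCommGroup M] [Module A M] [Module.Finite A M] [Module R M]
    [IsScalarTower R A M] {ι : R →ₗ[R] M} {π : M →ₗ[R] R} (h : π ∘ₗ ι = LinearMap.id)
    {P Q : Submodule A M}
    (hP : (P.restrictScalars R).map (ι ∘ₗ π) ≤ P.restrictScalars R)
    (hQ : (Q.restrictScalars R).map (ι ∘ₗ π) ≤ Q.restrictScalars R)
    (hCM : IsCMModule A (Q ⧸ P.comap Q.subtype)) :
    IsCMModule R (((Q.restrictScalars R).comap ι) ⧸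
      ((P.restrictScalars R).comap ι).comap ((Q.restrictScalars R).comap ι).subtype) := by
  let S := (P.comap Q.subtype).restrictScalars R
  let S' := ((P.restrictScalars R).comap ι).comap ((Q.restrictScalars R).comap ι).subtype
  let e := Submodule.Quotient.restrictScalarsEquiv R (P.comap Q.subtype)
  let i : (Q.restrictScalars R).comap ι →ₗ[R] Q :=
    ι.restrict (q := Q.restrictScalars R) fun _ hx => hx
  let p : Q →ₗ[R] (Q.restrictScalars R).comap ι :=
    π.restrict (p := Q.restrictScalars R) fun _ hx => hQ (Submodule.mem_map_of_mem hx)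
  have hi : S' ≤ S.comap i := fun _ hx => hx
  have hp : S ≤ S'.comap p := fun _ hx => hP (Submodule.mem_map_of_mem hx)
  refine hCM.of_retract (e.toLinearMap ∘ₗ S'.mapQ S i hi)
    (S.mapQ S' p hp ∘ₗ e.symm.toLinearMap) ?_
  ext x
  simp only [LinearMap.comp_apply, LinearEquiv.coe_coe, LinearEquiv.symm_apply_apply,
    Submodule.mkQ_apply, Submodule.mapQ_apply, LinearMap.id_apply]
  exact congrArg _ (Subtype.ext (LinearMap.congr_fun h x))

namespace IsDimFiltration

variable {R A M : Type*} [CommRing R] [CommRing A] [Algebra R A] [Algebra.IsIntegral R A]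
  [AddCommGroup M] [Module A M] [Module R M] [IsScalarTower R A M]
  {ℓ : ℕ} {D : Fin (ℓ + 1) → Submodule A M}

theorem le_restrictScalars (hD : IsDimFiltration A M ℓ D) (i : Fin ℓ) {L : Submodule R M}
    (hL : moduleDim R L ≤ moduleDim R (D i.succ)) : L ≤ (D i.succ).restrictScalars R := by
  rw [← moduleDim_span (A := A), ← moduleDim_restrictScalars R A (D i.succ)] at hL
  exact fun x hx => (hD.2.2.2.1 i).2 hL (Submodule.subset_span hx)

/-- The terms of a dimension filtration are stable under endomorphisms over the base ring. -/
theorem map_le (hD : IsDimFiltration A M ℓ D) (f : M →ₗ[R] M) (i : Fin (ℓ + 1)) :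
    ((D i).restrictScalars R).map f ≤ (D i).restrictScalars R := by
  induction i using Fin.cases with
  | zero => simp [hD.1]
  | succ i =>
    exact hD.le_restrictScalars i (moduleDim_le_of_surjective
      (f.submoduleMap ((D i.succ).restrictScalars R)) (f.submoduleMap_surjective _))

theorem le_comap (hD : IsDimFiltration A M ℓ D) (ι : R →ₗ[R] M) (i : Fin ℓ) {N : Submodule R R}
    (hN : moduleDim R N ≤ moduleDim R (D i.succ)) :
    N ≤ ((D i.succ).restrictScalars R).comap ι :=
  Submodule.map_le_iff_le_comap.1 (hD.le_restrictScalars i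
    ((moduleDim_le_of_surjective (ι.submoduleMap N) (ι.submoduleMap_surjective N)).trans hN))

theorem isGreatest_comap (hD : IsDimFiltration A M ℓ D) {ι : R →ₗ[R] M}
    (hι : Function.Injective ι) (i : Fin ℓ) :
    IsGreatest {N : Submodule R R |
      moduleDim R N ≤ moduleDim R (((D i.succ).restrictScalars R).comap ι)}
      (((D i.succ).restrictScalars R).comap ι) :=
  ⟨le_refl (moduleDim _ _), fun _ hN => hD.le_comap ι i (le_trans hN (moduleDim_comap_le hι _))⟩

theorem exists_comap_eq [IsNoetherian A M] (hD : IsDimFiltration A M ℓ D) {ι : R →ₗ[R] M}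
    (hι : Function.Injective ι) {N : Submodule R R} (hN : N ≠ ⊥)
    (hgr : IsGreatest {N' : Submodule R R | moduleDim R N' ≤ moduleDim R N} N) :
    ∃ i, ((D i).restrictScalars R).comap ι = N := by
  let P : Submodule A M := Submodule.span A (N.map ι : Submodule R M)
  have hNP : N.map ι ≤ P.restrictScalars R := fun x hx => Submodule.subset_span hx
  have hP : moduleDim A P = moduleDim R N :=
    (moduleDim_span _).trans (le_antisymm
      (moduleDim_le_of_surjective (ι.submoduleMap N) (ι.submoduleMap_surjective N))
      (moduleDim_le_of_injective (Submodule.equivMapOfInjective ι hι N).toLinearMap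
        (LinearEquiv.injective _)))
  obtain ⟨G, hPG, hG⟩ := exists_maximal_ge_of_wellFoundedGT
    (fun G : Submodule A M => moduleDim A G ≤ moduleDim R N) P hP.le
  have hGdim : moduleDim A G = moduleDim R N :=
    le_antisymm hG.1 (hP ▸ moduleDim_mono hPG)
  have hGbot : G ≠ ⊥ := by
    rintro rfl
    refine hN (eq_bot_iff.2 fun x hx => hι ?_)
    simpa using hPG (hNP (Submodule.mem_map_of_mem hx))
  obtain ⟨i, rfl⟩ := hD.2.2.2.2 G hGbot ⟨le_refl (moduleDim _ _), fun G' hG' =>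
    le_sup_right.trans (hG.2 ((moduleDim_sup_le G G').trans
      (max_le hG.1 (hG'.trans hG.1))) le_sup_left)⟩
  refine ⟨i, le_antisymm (hgr.2 ?_) (Submodule.map_le_iff_le_comap.1 (hNP.trans hPG))⟩
  exact (moduleDim_comap_le hι _).trans_eq ((moduleDim_restrictScalars R A _).symm.trans hGdim)

end IsDimFiltration

/-- If `R` is a direct summand of a finitely generated `A`-module `M`
(as an `R`-module) and `M` is a sequentially Cohen-Macaulay `A`-module, then `R` is a
sequentially Cohen-Macaulay local ring. -/
theorem stmt8 (R : Type*) [CommRing R] [IsNoetherianRing R] [IsLocalRing R]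
    (A : Type*) [CommRing A] [IsNoetherianRing A] [IsLocalRing A]
    [Algebra R A] [Module.Finite R A]
    (M : Type*) [AddCommGroup M] [Module A M] [Module.Finite A M]
    [Module R M] [IsScalarTower R A M]
    (ι : R →ₗ[R] M) (π : M →ₗ[R] R) (hsplit : π.comp ι = LinearMap.id)
    (hM : IsSeqCM A M) :
    IsSeqCMRing R := by
  obtain ⟨ℓ, D, hD, hCM⟩ := hM
  have hι : Function.Injective ι := Function.LeftInverse.injective (LinearMap.congr_fun hsplit)
  let J : Fin (ℓ + 1) → Submodule R R := fun i => ((D i).restrictScalars R).comap ι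
  have hJ : Monotone J := fun i j hij => Submodule.comap_mono (hD.2.2.1.monotone hij)
  obtain ⟨k, g, hg, hrange, h0, hlast, hstep⟩ := exists_strictMono_of_monotone J hJ
  refine ⟨k, g, ⟨?_, ?_, hg, fun i => ?_, fun N hN hgr => ?_⟩, fun i => ?_⟩
  · simpa [h0, J, hD.1] using LinearMap.ker_eq_bot.2 hι
  · simp [hlast, J, hD.2.1]
  · obtain ⟨j, -, hj⟩ := hstep i
    rw [hj]
    exact hD.isGreatest_comap hι j
  · exact Set.mem_range.1 (hrange ▸ hD.exists_comap_eq hι hN hgr)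
  · obtain ⟨j, hj, hj'⟩ := hstep i
    rw [hj, hj']
    exact (hCM j).comap_subquotient hsplit (hD.map_le _ _) (hD.map_le _ _)
end
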